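/- Let T be a deterministic two-way parity transducer with input alphabet A and output alphabet B. Then the partial function ⟦T⟧ is continuous on its domain: for every x ∈ dom(T) and every i ≥ 0 there exists j ≥ 0 such that for all y ∈ dom(T), if |x ∧ y| ≥ j then |⟦T⟧(x) ∧ ⟦T⟧(y)| ≥ i. Equivalently, ⟦T⟧ : dom(T) → B^ω is continuous for the metrics d(u,v) = 2^{−|u∧v|} on A^ω and on B^ω, where u ∧ v denotes the longest common prefix of u and v. -/

import Mathlib

namespace Paper

/-! ## Two-way parity automata and transducers over infinite words.

An infinite word over an alphabet `A` is a function `ℕ → A`.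
A configuration `⊢ u p v` with `w = u v` is encoded as a pair `(p, |u|) : Q × ℕ`.
The left end-marker `⊢` is encoded as `(none : Option A)`. -/

/-- A two-way automaton (without acceptance condition): states `Q` partitioned into forward
states (`fwd`) and backward states, an initial forward state, and a transition relation `Δ`
over `Q × (A ∪ {⊢}) × Q` where transitions on the end-marker `⊢` (encoded `none`) go from
backward to forward states. -/
structure TwoWayAut (A : Type) where
  Q : Type
  finQ : Fintype Q
  fwd : Q → Prop
  init : Q
  init_fwd : fwd init
  Δ : Set (Q × Option A × Q)
  marker : ∀ p q, (p, (none : Option A), q) ∈ Δ → ¬ fwd p ∧ fwd q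

attribute [instance] TwoWayAut.finQ

variable {A B : Type}

/-- `StepVia M w c t c'` : from configuration `c`, using transition `t`, the automaton `M`
reaches the successor configuration `c'` on input word `w`. -/
def StepVia (M : TwoWayAut A) (w : ℕ → A) (c : M.Q × ℕ)
    (t : M.Q × Option A × M.Q) (c' : M.Q × ℕ) : Prop :=
  t ∈ M.Δ ∧ t.1 = c.1 ∧ t.2.2 = c'.1 ∧
    ((M.fwd c.1 ∧ t.2.1 = some (w c.2) ∧
        ((M.fwd c'.1 ∧ c'.2 = c.2 + 1) ∨ (¬ M.fwd c'.1 ∧ c'.2 = c.2))) ∨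
     (¬ M.fwd c.1 ∧ 0 < c.2 ∧ t.2.1 = some (w (c.2 - 1)) ∧
        ((M.fwd c'.1 ∧ c'.2 = c.2) ∨ (¬ M.fwd c'.1 ∧ c'.2 = c.2 - 1))) ∨
     (¬ M.fwd c.1 ∧ c.2 = 0 ∧ t.2.1 = none ∧ c'.2 = 0))

/-- The successor relation on configurations. -/
def Step (M : TwoWayAut A) (w : ℕ → A) (c c' : M.Q × ℕ) : Prop :=
  ∃ t, StepVia M w c t c'

/-- An infinite run of `M` on `w`, given by its configurations and the transitions taken. -/
def IsRun (M : TwoWayAut A) (w : ℕ → A) (cfg : ℕ → M.Q × ℕ)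
    (tr : ℕ → M.Q × Option A × M.Q) : Prop :=
  cfg 0 = (M.init, 0) ∧ ∀ i, StepVia M w (cfg i) (tr i) (cfg (i + 1))

/-- The run reads the whole word: the prefix lengths are unbounded. -/
def ReadsWhole (M : TwoWayAut A) (cfg : ℕ → M.Q × ℕ) : Prop :=
  ∀ n : ℕ, ∃ i, n ≤ (cfg i).2

/-- `t` occurs infinitely often in the sequence `tr`. -/
def InfOften {T : Type} (tr : ℕ → T) (t : T) : Prop :=
  ∀ n, ∃ i, n ≤ i ∧ tr i = t

def Deterministic (M : TwoWayAut A) : Prop :=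
  ∀ p a q q', (p, a, q) ∈ M.Δ → (p, a, q') ∈ M.Δ → q = q'

def Codeterministic (M : TwoWayAut A) : Prop :=
  ∀ p p' a q, (p, a, q) ∈ M.Δ → (p', a, q) ∈ M.Δ → p = p'

def Reversible (M : TwoWayAut A) : Prop :=
  Deterministic M ∧ Codeterministic M

def Oneway (M : TwoWayAut A) : Prop := ∀ q, M.fwd q

/-- A two-way parity automaton: a two-way automaton together with a finite family of
coloring functions (indexed by `CIdx`). -/
structure ParityAut (A : Type) extends TwoWayAut A where
  CIdx : Type
  finC : Fintype CIdx
  color : CIdx → (Q × Option A × Q) → ℕ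

attribute [instance] ParityAut.finC

/-- The parity acceptance condition: for every coloring function, the minimal color of the
transitions taken infinitely often is even. -/
def ParityCond (M : ParityAut A) (tr : ℕ → M.Q × Option A × M.Q) : Prop :=
  ∀ c : M.CIdx, Even (sInf {m : ℕ | ∃ t, InfOften tr t ∧ M.color c t = m})

/-- Acceptance of an infinite word by a two-way parity automaton. -/
def ParityAut.Accepts (M : ParityAut A) (w : ℕ → A) : Prop :=
  ∃ cfg tr, IsRun M.toTwoWayAut w cfg tr ∧ ReadsWhole M.toTwoWayAut cfg ∧ ParityCond M tr

/-- All colors of `M` (on its transitions) belong to `{0, …, ℓ-1}`. -/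
def ColorsLt (M : ParityAut A) (ℓ : ℕ) : Prop :=
  ∀ (c : M.CIdx) t, t ∈ M.Δ → M.color c t < ℓ

/-- `l` is a prefix of the infinite word `x`. -/
def IsPrefixOf {C : Type} (l : List C) (x : ℕ → C) : Prop :=
  ∀ (i : ℕ) (h : i < l.length), l.get ⟨i, h⟩ = x i

/-- Concatenation of the first `n` words of a sequence of finite words. -/
def prefixCat {C : Type} (f : ℕ → List C) : ℕ → List C
  | 0 => []
  | n + 1 => prefixCat f n ++ f n

/-- The concatenation of the sequence of finite words `f` is the infinite word `x`. -/
def FlattenTo {C : Type} (f : ℕ → List C) (x : ℕ → C) : Prop :=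
  (∀ n, IsPrefixOf (prefixCat f n) x) ∧ ∀ m, ∃ n, m ≤ (prefixCat f n).length

/-- A two-way parity transducer: a two-way parity automaton (whose underlying automaton is
required to be deterministic via hypotheses) together with an output function. -/
structure TwoWayTrans (A B : Type) extends ParityAut A where
  out : (Q × Option A × Q) → List B

/-- `T.Realizes w x` : the word `w` is accepted by (the deterministic transducer) `T`,
the produced output is infinite and equals `x`.  This is the graph of the partial function
`⟦T⟧ : A^ω ⇀ B^ω`. -/
def TwoWayTrans.Realizes (T : TwoWayTrans A B) (w : ℕ → A) (x : ℕ → B) : Prop :=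
  ∃ cfg tr, IsRun T.toTwoWayAut w cfg tr ∧ ReadsWhole T.toTwoWayAut cfg ∧
    ParityCond T.toParityAut tr ∧ FlattenTo (fun i => T.out (tr i)) x

/-- A two-way Büchi transducer: accepting transitions `acc` instead of coloring functions. -/
structure BuchiTrans (A B : Type) extends TwoWayAut A where
  acc : Set (Q × Option A × Q)
  out : (Q × Option A × Q) → List B

def BuchiTrans.Realizes (T : BuchiTrans A B) (w : ℕ → A) (x : ℕ → B) : Prop :=
  ∃ cfg tr, IsRun T.toTwoWayAut w cfg tr ∧ ReadsWhole T.toTwoWayAut cfg ∧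
    (∀ n, ∃ i, n ≤ i ∧ tr i ∈ T.acc) ∧ FlattenTo (fun i => T.out (tr i)) x

/-- A two-way transducer with no acceptance condition. -/
structure NoAccTrans (A B : Type) extends TwoWayAut A where
  out : (Q × Option A × Q) → List B

def NoAccTrans.Realizes (T : NoAccTrans A B) (w : ℕ → A) (x : ℕ → B) : Prop :=
  ∃ cfg tr, IsRun T.toTwoWayAut w cfg tr ∧ ReadsWhole T.toTwoWayAut cfg ∧
    FlattenTo (fun i => T.out (tr i)) x

/-! ## One-way parity automata, transducers, and copyless parity streaming string
transducers.  A one-way automaton has only forward states and never reads the end-marker,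
so we use a simplified (equivalent) presentation. -/

structure OnewayAut (A : Type) where
  Q : Type
  finQ : Fintype Q
  init : Q
  Δ : Set (Q × A × Q)
  CIdx : Type
  finC : Fintype CIdx
  color : CIdx → (Q × A × Q) → ℕ

attribute [instance] OnewayAut.finQ
attribute [instance] OnewayAut.finC

def OnewayDet (M : OnewayAut A) : Prop :=
  ∀ p a q q', (p, a, q) ∈ M.Δ → (p, a, q') ∈ M.Δ → q = q'

def OnewayRun (M : OnewayAut A) (w : ℕ → A) (s : ℕ → M.Q) : Prop :=
  s 0 = M.init ∧ ∀ i, (s i, w i, s (i + 1)) ∈ M.Δ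

def OnewayParityCond (M : OnewayAut A) (tr : ℕ → M.Q × A × M.Q) : Prop :=
  ∀ c : M.CIdx, Even (sInf {m : ℕ | ∃ t, InfOften tr t ∧ M.color c t = m})

def OnewayAut.Accepts (M : OnewayAut A) (w : ℕ → A) : Prop :=
  ∃ s, OnewayRun M w s ∧ OnewayParityCond M (fun i => (s i, w i, s (i + 1)))

def OnewayColorsLt (M : OnewayAut A) (ℓ : ℕ) : Prop :=
  ∀ (c : M.CIdx) t, t ∈ M.Δ → M.color c t < ℓ

/-- A one-way (deterministic) parity transducer. -/
structure OnewayTrans (A B : Type) extends OnewayAut A where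
  out : (Q × A × Q) → List B

def OnewayTrans.Realizes (T : OnewayTrans A B) (w : ℕ → A) (x : ℕ → B) : Prop :=
  ∃ s, OnewayRun T.toOnewayAut w s ∧
    OnewayParityCond T.toOnewayAut (fun i => (s i, w i, s (i + 1))) ∧
    FlattenTo (fun i => T.out (s i, w i, s (i + 1))) x

/-- Number of occurrences of `a` in the list `l` (classically). -/
noncomputable def occ {C : Type} (a : C) (l : List C) : ℕ :=
  l.countP fun x => @decide (x = a) (Classical.propDecidable _)

/-- A substitution `σ : R → (R ⊎ B)*` is copyless if every register occurs at most once in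
the concatenation of all the `σ r'`. -/
def Copyless {R C : Type} [Fintype R] (σ : R → List (R ⊕ C)) : Prop :=
  ∀ r : R, (∑ r' : R, occ (Sum.inl r) (σ r')) ≤ 1

/-- Applying an assignment `ν : R → B*` (extended to a morphism `(R ⊎ B)* → B*`). -/
def subApply {R C : Type} (ν : R → List C) : List (R ⊕ C) → List C
  | [] => []
  | Sum.inl r :: l => ν r ++ subApply ν l
  | Sum.inr b :: l => b :: subApply ν l

/-- A copyless parity streaming string transducer: a (deterministic) one-way parity
automaton with a finite set `R` of registers, a distinguished output register, and copyless
register updates, where the update of `outReg` always starts with `outReg`. -/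
structure CPSST (A B : Type) extends OnewayAut A where
  R : Type
  finR : Fintype R
  outReg : R
  upd : (Q × A × Q) → R → List (R ⊕ B)
  copyless : ∀ t, @Copyless R B finR (upd t)
  out_form : ∀ t, ∃ γ, upd t outReg = Sum.inl outReg :: γ

attribute [instance] CPSST.finR

/-- The register contents along a run: `ν_0 r = ε` and `ν_{i+1} = ν_i ∘ λ(t_i)`. -/
def regVal (T : CPSST A B) (w : ℕ → A) (s : ℕ → T.Q) : ℕ → T.R → List B
  | 0 => fun _ => []
  | i + 1 => fun r => subApply (regVal T w s i) (T.upd (s i, w i, s (i + 1)) r)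

/-- `T.Realizes w x` : the (deterministic) CPSST `T` has an accepting run on `w` whose
output-register contents are unbounded with limit `x`. -/
def CPSST.Realizes (T : CPSST A B) (w : ℕ → A) (x : ℕ → B) : Prop :=
  ∃ s, OnewayRun T.toOnewayAut w s ∧
    OnewayParityCond T.toOnewayAut (fun i => (s i, w i, s (i + 1))) ∧
    (∀ i, IsPrefixOf (regVal T w s i T.outReg) x) ∧
    (∀ m, ∃ i, m ≤ (regVal T w s i T.outReg).length)

/-- The one-way parity transducer with the same underlying automaton as the CPSST `T`,
which outputs on each transition the (copyless) substitution that `T` applies. -/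
def enrich (T : CPSST A B) :
    OnewayTrans A {σ : T.R → List (T.R ⊕ B) // Copyless σ} where
  toOnewayAut := T.toOnewayAut
  out := fun t => [⟨T.upd t, T.copyless t⟩]

/-! ## Merging forests -/

/-- A merging forest on `(Q⁺ ⊎ Q⁻, χ, ℓ)`: a finite rooted forest (given by a `parent` map
with no cycles) whose leaves (childless nodes) are injectively labeled in `Q⁻` and carry a
`χ`-tuple of integers `< ℓ`, whose roots are injectively labeled in `Q⁺`, and in which every
unary node (exactly one child) is a root. -/
structure MForest (Qp Qm χ : Type) (ℓ : ℕ) where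
  V : Type
  finV : Fintype V
  parent : V → Option V
  acyc : ∀ v : V, ¬ Relation.TransGen (fun a b => parent a = some b) v v
  leafLab : V → Qm
  rootLab : V → Qp
  tup : V → χ → ℕ
  tup_lt : ∀ v, (∀ u, parent u ≠ some v) → ∀ c, tup v c < ℓ
  leaf_inj : ∀ u v, (∀ u', parent u' ≠ some u) → (∀ v', parent v' ≠ some v) →
    leafLab u = leafLab v → u = v
  root_inj : ∀ u v, parent u = none → parent v = none → rootLab u = rootLab v → u = v
  unary_root : ∀ v : V, (∃! u, parent u = some v) → parent v = none

attribute [instance] MForest.finV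

/-- Isomorphism of merging forests: a bijection of the nodes commuting with `parent` and
preserving the leaf labels, the leaf tuples and the root labels. -/
def MFIso {Qp Qm χ : Type} {ℓ : ℕ} (F G : MForest Qp Qm χ ℓ) : Prop :=
  ∃ e : F.V ≃ G.V,
    (∀ v, G.parent (e v) = Option.map e (F.parent v)) ∧
    (∀ v, (∀ u, F.parent u ≠ some v) →
      F.leafLab v = G.leafLab (e v) ∧ ∀ c, F.tup v c = G.tup (e v) c) ∧
    (∀ v, F.parent v = none → F.rootLab v = G.rootLab (e v))

end Paper

namespace Paper

/-! After `k` steps the head has moved at most `k` letters to the right, so, by determinism, the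
first `n` transitions of a run depend only on the first `n` letters of the input. If these
transitions already output `i` letters, then the first `n` letters of the input fix the first `i`
letters of the image. -/

section

variable {A B : Type}

/-- The symbol of `⊢ w` under the head in configuration `c`: the letter to the right of the head
in a forward state, the one to its left (possibly `⊢`, i.e. `none`) in a backward state. -/
noncomputable def scanned (M : TwoWayAut A) (w : ℕ → A) (c : M.Q × ℕ) : Option A :=
  open scoped Classical in
  if M.fwd c.1 then some (w c.2) else if c.2 = 0 then none else some (w (c.2 - 1))

/-- The head position after a move from configuration `c` to state `q`. A transition reading `⊢`
enters a forward state, so the subtraction truncates on no legal move. -/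
noncomputable def nextPos (M : TwoWayAut A) (c : M.Q × ℕ) (q : M.Q) : ℕ :=
  open scoped Classical in
  if M.fwd c.1 then (if M.fwd q then c.2 + 1 else c.2) else if M.fwd q then c.2 else c.2 - 1

theorem stepVia_iff {M : TwoWayAut A} {w : ℕ → A} {c c' : M.Q × ℕ} {t : M.Q × Option A × M.Q} :
    StepVia M w c t c' ↔
      t ∈ M.Δ ∧ t = (c.1, scanned M w c, c'.1) ∧ c'.2 = nextPos M c c'.1 := by
  obtain ⟨p, i⟩ := c
  obtain ⟨q, j⟩ := c'
  obtain ⟨p', a, q'⟩ := t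
  have hmarker := M.marker p q
  simp only [StepVia, scanned, nextPos, Prod.mk.injEq]
  grind

theorem scanned_congr (M : TwoWayAut A) {x y : ℕ → A} {c : M.Q × ℕ}
    (hxy : ∀ m ≤ c.2, x m = y m) : scanned M x c = scanned M y c := by
  simp only [scanned, hxy c.2 le_rfl, hxy (c.2 - 1) (Nat.sub_le _ _)]

theorem nextPos_le (M : TwoWayAut A) (c : M.Q × ℕ) (q : M.Q) : nextPos M c q ≤ c.2 + 1 := by
  grind [nextPos]

theorem StepVia.eq_of_scanned_eq {M : TwoWayAut A} (hdet : Deterministic M) {x y : ℕ → A}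
    {c d d' : M.Q × ℕ} {t t' : M.Q × Option A × M.Q} (hxy : scanned M x c = scanned M y c)
    (h : StepVia M x c t d) (h' : StepVia M y c t' d') : t = t' ∧ d = d' := by
  obtain ⟨ht, rfl, hd⟩ := stepVia_iff.1 h
  obtain ⟨ht', rfl, hd'⟩ := stepVia_iff.1 h'
  rw [hxy] at ht ⊢
  have hq : d.1 = d'.1 := hdet _ _ _ _ ht ht'
  exact ⟨by rw [hq], Prod.ext hq (by rw [hd, hd', hq])⟩

namespace IsRun

variable {M : TwoWayAut A} {x y : ℕ → A} {cfg cfg' : ℕ → M.Q × ℕ}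
  {tr tr' : ℕ → M.Q × Option A × M.Q}

theorem pos_le (h : IsRun M x cfg tr) (k : ℕ) : (cfg k).2 ≤ k := by
  induction k with
  | zero => rw [h.1]
  | succ k ih =>
    calc (cfg (k + 1)).2 = nextPos M (cfg k) (cfg (k + 1)).1 := (stepVia_iff.1 (h.2 k)).2.2
      _ ≤ (cfg k).2 + 1 := nextPos_le M _ _
      _ ≤ k + 1 := Nat.succ_le_succ ih

theorem step_congr (hdet : Deterministic M) (h : IsRun M x cfg tr) (h' : IsRun M y cfg' tr')
    {k : ℕ} (hcfg : cfg k = cfg' k) (hxy : ∀ m ≤ k, x m = y m) :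
    tr k = tr' k ∧ cfg (k + 1) = cfg' (k + 1) :=
  (h.2 k).eq_of_scanned_eq hdet (scanned_congr M fun m hm => hxy m (hm.trans (h.pos_le k)))
    (hcfg ▸ h'.2 k)

theorem cfg_congr (hdet : Deterministic M) (h : IsRun M x cfg tr) (h' : IsRun M y cfg' tr')
    {k : ℕ} (hxy : ∀ m < k, x m = y m) : cfg k = cfg' k := by
  induction k with
  | zero => exact h.1.trans h'.1.symm
  | succ k ih =>
    have hcfg : cfg k = cfg' k := ih fun m hm => hxy m (hm.trans k.lt_succ_self)
    exact (h.step_congr hdet h' hcfg fun m hm => hxy m (Nat.lt_succ_of_le hm)).2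

theorem tr_congr (hdet : Deterministic M) (h : IsRun M x cfg tr) (h' : IsRun M y cfg' tr')
    {k : ℕ} (hxy : ∀ m ≤ k, x m = y m) : tr k = tr' k :=
  (h.step_congr hdet h' (h.cfg_congr hdet h' fun m hm => hxy m hm.le) hxy).1

end IsRun

theorem prefixCat_congr {f g : ℕ → List B} {n : ℕ} (h : ∀ k < n, f k = g k) :
    prefixCat f n = prefixCat g n := by
  induction n with
  | zero => rfl
  | succ n ih =>
    simp only [prefixCat, h n n.lt_succ_self, ih fun k hk => h k (hk.trans n.lt_succ_self)]

theorem IsPrefixOf.eq_of_lt_length {l : List B} {u v : ℕ → B} (hu : IsPrefixOf l u)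
    (hv : IsPrefixOf l v) {m : ℕ} (hm : m < l.length) : u m = v m :=
  (hu m hm).symm.trans (hv m hm)

theorem dbt_continuous_general {M : TwoWayAut A} (hdet : Deterministic M)
    (out : M.Q × Option A × M.Q → List B) {x : ℕ → A} {cfg : ℕ → M.Q × ℕ}
    {tr : ℕ → M.Q × Option A × M.Q} {fx : ℕ → B} (hx : IsRun M x cfg tr)
    (hfx : FlattenTo (fun k => out (tr k)) fx) (i : ℕ) :
    ∃ j : ℕ, ∀ (y : ℕ → A) (cfg' : ℕ → M.Q × ℕ) (tr' : ℕ → M.Q × Option A × M.Q) (fy : ℕ → B),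
      IsRun M y cfg' tr' → FlattenTo (fun k => out (tr' k)) fy →
        (∀ m < j, x m = y m) → ∀ m < i, fx m = fy m := by
  obtain ⟨hpre, hlen⟩ := hfx
  obtain ⟨n, hn⟩ := hlen i
  refine ⟨n, fun y cfg' tr' fy hy hfy hxy m hm => ?_⟩
  have htr : ∀ k < n, tr k = tr' k := fun k hk =>
    hx.tr_congr hdet hy fun m hm => hxy m (hm.trans_lt hk)
  have hcat : prefixCat (fun k => out (tr k)) n = prefixCat (fun k => out (tr' k)) n :=
    prefixCat_congr fun k hk => congrArg out (htr k hk)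
  exact (hpre n).eq_of_lt_length (hcat ▸ hfy.1 n) (hm.trans_le hn)

end

/-- The partial function realized by a deterministic two-way parity
transducer is continuous on its domain: for every `x` in the domain and every `i`, there is
`j` such that any `y` in the domain agreeing with `x` on its first `j` letters has its image
agreeing with the image of `x` on the first `i` letters (i.e. `|x ∧ y| ≥ j` implies
`|⟦T⟧x ∧ ⟦T⟧y| ≥ i` for the metric `d(u,v) = 2^{-|u∧v|}`). -/
theorem dbt_continuous (A B : Type) [Fintype A] [Fintype B]
    (T : TwoWayTrans A B) (hdet : Deterministic T.toTwoWayAut) :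
    ∀ (x : ℕ → A) (fx : ℕ → B), T.Realizes x fx →
      ∀ i : ℕ, ∃ j : ℕ, ∀ (y : ℕ → A) (fy : ℕ → B), T.Realizes y fy →
        (∀ m, m < j → x m = y m) → (∀ m, m < i → fx m = fy m) := by
  rintro x fx ⟨cfg, tr, hx, -, -, hfx⟩ i
  obtain ⟨j, hj⟩ := dbt_continuous_general hdet T.out hx hfx i
  exact ⟨j, fun y fy ⟨cfg', tr', hy, _, _, hfy⟩ => hj y cfg' tr' fy hy hfy⟩

end Paper
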